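/- arXiv:1810.12871 — 2 statements merged into one kernel-verified Lean document; each statement's English description precedes it below -/
import Mathlib

section
/- For every n ≥ 1, M(n) ≤ 3π, where M(n) = (3π/2)β(n)^{−2}. -/
/-- The real DFT orthonormal basis vectors: with `ω = 2π/n` and `h = ⌈(n-1)/2⌉ = n/2`
(natural division), `ψ_0(i) = 1`, `ψ_j(i) = √2 cos(ωji)` for `0 < j < h`,
`ψ_h(i) = cos(ωhi)` if `n` even and `√2 cos(ωhi)` if `n` odd, and
`ψ_j(i) = √2 sin(ωji)` for `h < j < n`. -/
noncomputable def psi (n : ℕ) (j i : ℕ) : ℝ :=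
  if j = 0 then 1
  else if j < n / 2 then Real.sqrt 2 * Real.cos (2 * Real.pi / n * j * i)
  else if j = n / 2 then
    (if n % 2 = 0 then Real.cos (2 * Real.pi / n * j * i)
     else Real.sqrt 2 * Real.cos (2 * Real.pi / n * j * i))
  else Real.sqrt 2 * Real.sin (2 * Real.pi / n * j * i)

/-- Normalized ℓ¹ norm `(1/n) ∑_{i<n} |ψ_j(i)|` of the `j`-th real DFT basis vector. -/
noncomputable def l1psi (n j : ℕ) : ℝ := (1 / (n : ℝ)) * ∑ i ∈ Finset.range n, |psi n j i|

/-- `β(n) = min_{0 ≤ j < n} (1/n) ∑_i |ψ_j(i)|`. -/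
noncomputable def beta (n : ℕ) : ℝ := sInf {x | ∃ j < n, x = l1psi n j}

/-- Nazarov's constant `M(n) = (3π/2) β(n)⁻²`. -/
noncomputable def Mnaz (n : ℕ) : ℝ := (3 * Real.pi / 2) / (beta n) ^ 2

/-!
Every `ψ_j` has mean square `1` and is bounded by `√2`. Since `|ψ_j|² ≤ √2 |ψ_j|`, its mean
absolute value is at least `1 / √2`, so that `β(n)² ≥ 1/2`. The mean squares come from the
double-angle formula and the vanishing of the sum of the `n`-th roots of unity raised to a power
not divisible by `n`.
-/

open Finset Real

theorem sum_sq_le_mul_sum_abs {ι R : Type*} [CommRing R] [LinearOrder R] [IsOrderedRing R]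
    {s : Finset ι} {f : ι → R} {C : R} (hf : ∀ i ∈ s, |f i| ≤ C) :
    ∑ i ∈ s, f i ^ 2 ≤ C * ∑ i ∈ s, |f i| := by
  rw [mul_sum]
  refine sum_le_sum fun i hi => ?_
  calc f i ^ 2 = |f i| * |f i| := by rw [← sq, sq_abs]
    _ ≤ C * |f i| := mul_le_mul_of_nonneg_right (hf i hi) (abs_nonneg _)

section RootsOfUnity

variable {n k : ℕ}

theorem sum_range_pow_pow_eq_zero_of_isPrimitiveRoot {R : Type*} [CommRing R] [IsDomain R] {ζ : R}
    (hζ : IsPrimitiveRoot ζ n) (hk : ¬ n ∣ k) : ∑ i ∈ range n, (ζ ^ k) ^ i = 0 := by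
  have hζk : ζ ^ k - 1 ≠ 0 := sub_ne_zero.2 (mt (hζ.pow_eq_one_iff_dvd k).1 hk)
  refine (mul_eq_zero.1 ?_).resolve_right hζk
  rw [geom_sum_mul, pow_right_comm, hζ.pow_eq_one, one_pow, sub_self]

theorem sum_range_cos_two_pi_div_mul_eq_zero (hk : ¬ n ∣ k) :
    ∑ i ∈ range n, cos (2 * π / n * k * i) = 0 := by
  rcases eq_or_ne n 0 with rfl | hn
  · exact sum_range_zero _
  have hre (i : ℕ) : cos (2 * π / n * k * i) =
      ((Complex.exp (2 * π * Complex.I / n) ^ k) ^ i).re := by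
    rw [← Complex.exp_ofReal_mul_I_re, ← Complex.exp_nat_mul, ← Complex.exp_nat_mul]
    congr 2
    push_cast
    ring
  simp only [hre, ← Complex.re_sum, Complex.zero_re,
    sum_range_pow_pow_eq_zero_of_isPrimitiveRoot (Complex.isPrimitiveRoot_exp n hn) hk]

theorem sum_range_cos_two_mul_two_pi_div_mul_eq_zero (hk : ¬ n ∣ 2 * k) :
    ∑ i ∈ range n, cos (2 * (2 * π / n * k * i)) = 0 := by
  rw [← sum_range_cos_two_pi_div_mul_eq_zero hk]
  refine sum_congr rfl fun i _ => congrArg cos ?_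
  push_cast
  ring

theorem sum_range_cos_sq_two_pi_div_mul (hk : ¬ n ∣ 2 * k) :
    ∑ i ∈ range n, cos (2 * π / n * k * i) ^ 2 = n / 2 := by
  simp only [cos_sq, sum_add_distrib, ← sum_div,
    sum_range_cos_two_mul_two_pi_div_mul_eq_zero hk, sum_const, card_range, nsmul_eq_mul, mul_one,
    zero_div, add_zero]

theorem sum_range_sin_sq_two_pi_div_mul (hk : ¬ n ∣ 2 * k) :
    ∑ i ∈ range n, sin (2 * π / n * k * i) ^ 2 = n / 2 := by
  simp only [sin_sq, sum_sub_distrib, sum_range_cos_sq_two_pi_div_mul hk, sum_const, card_range,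
    nsmul_eq_mul, mul_one, sub_half]

end RootsOfUnity

theorem sum_sqrt_two_mul_sq {ι : Type*} (s : Finset ι) (f : ι → ℝ) :
    ∑ i ∈ s, (√2 * f i) ^ 2 = 2 * ∑ i ∈ s, f i ^ 2 := by
  simp only [mul_pow, sq_sqrt zero_le_two, mul_sum]

theorem cos_sq_two_pi_div_two_mul_mul {k : ℕ} (hk : k ≠ 0) (i : ℕ) :
    cos (2 * π / (2 * k : ℕ) * k * i) ^ 2 = 1 := by
  have hangle : 2 * π / (2 * k : ℕ) * k * i = i * π := by
    push_cast
    field_simp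
  rw [hangle, cos_nat_mul_pi, ← pow_mul, pow_mul', neg_one_sq, one_pow]

section RealFourierBasis

variable {n j : ℕ}

theorem abs_psi_le_sqrt_two (n j i : ℕ) : |psi n j i| ≤ √2 := by
  have one_le : 1 ≤ √2 := one_le_sqrt.2 one_le_two
  have scaled {x : ℝ} (hx : |x| ≤ 1) : |√2 * x| ≤ √2 := by
    rw [abs_mul, abs_of_nonneg (sqrt_nonneg 2)]
    exact mul_le_of_le_one_right (sqrt_nonneg 2) hx
  unfold psi
  split_ifs
  · rwa [abs_one]
  · exact scaled (abs_cos_le_one _)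
  · exact (abs_cos_le_one _).trans one_le
  · exact scaled (abs_cos_le_one _)
  · exact scaled (abs_sin_le_one _)

theorem not_dvd_two_mul_of_lt (h0 : j ≠ 0) (hj : j < n) (hmid : 2 * j ≠ n) : ¬ n ∣ 2 * j := by
  rintro ⟨c, hc⟩
  have hc_lt : c < 2 := by nlinarith
  interval_cases c <;> omega

theorem sum_range_psi_sq (hj : j < n) : ∑ i ∈ range n, psi n j i ^ 2 = n := by
  unfold psi
  split_ifs with h0 hlt hmid heven
  · simp
  · rw [sum_sqrt_two_mul_sq,
      sum_range_cos_sq_two_pi_div_mul (not_dvd_two_mul_of_lt h0 hj (by omega)),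
      mul_div_cancel₀ _ two_ne_zero]
  · obtain rfl : n = 2 * j := by omega
    simp only [cos_sq_two_pi_div_two_mul_mul h0, sum_const, card_range, nsmul_eq_mul, mul_one]
  · rw [sum_sqrt_two_mul_sq,
      sum_range_cos_sq_two_pi_div_mul (not_dvd_two_mul_of_lt h0 hj (by omega)),
      mul_div_cancel₀ _ two_ne_zero]
  · rw [sum_sqrt_two_mul_sq,
      sum_range_sin_sq_two_pi_div_mul (not_dvd_two_mul_of_lt h0 hj (by omega)),
      mul_div_cancel₀ _ two_ne_zero]

theorem inv_sqrt_two_le_l1psi (hj : j < n) : (√2)⁻¹ ≤ l1psi n j := by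
  have hn : (0 : ℝ) < n := Nat.cast_pos.2 (j.zero_le.trans_lt hj)
  have hsum : (n : ℝ) ≤ √2 * ∑ i ∈ range n, |psi n j i| :=
    (sum_range_psi_sq hj).symm.trans_le
      (sum_sq_le_mul_sum_abs fun i _ => abs_psi_le_sqrt_two n j i)
  rw [l1psi, one_div_mul_eq_div, le_div_iff₀ hn]
  exact (inv_mul_le_iff₀ (sqrt_pos.2 zero_lt_two)).2 hsum

theorem inv_sqrt_two_le_beta (hn : 1 ≤ n) : (√2)⁻¹ ≤ beta n := by
  refine le_csInf ⟨l1psi n 0, 0, hn, rfl⟩ ?_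
  rintro _ ⟨j, hj, rfl⟩
  exact inv_sqrt_two_le_l1psi hj

end RealFourierBasis

/-- `M(n) ≤ 3π` for every `n ≥ 1`. -/
theorem Mnaz_le_three_pi (n : ℕ) (hn : 1 ≤ n) : Mnaz n ≤ 3 * Real.pi := by
  have hbeta_sq : 1 / 2 ≤ beta n ^ 2 := by
    calc (1 / 2 : ℝ) = (√2)⁻¹ ^ 2 := by rw [inv_pow, sq_sqrt zero_le_two, one_div]
      _ ≤ beta n ^ 2 := pow_le_pow_left₀ (by positivity) (inv_sqrt_two_le_beta hn) 2
  calc Mnaz n = (3 * π / 2) / beta n ^ 2 := rfl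
    _ ≤ (3 * π / 2) / (1 / 2) := div_le_div_of_nonneg_left (by positivity) one_half_pos hbeta_sq
    _ = 3 * π := by ring
end

section
/- Let n ≥ 2, let a ∈ [0,1]^n, and set ρ = ρ(a). Then ∑_{j=1}^{n−1} |â_j|² ≤ n(⌊nρ⌋ + (nρ − ⌊nρ⌋)²) − n²ρ², and moreover n(⌊nρ⌋ + (nρ − ⌊nρ⌋)²) − n²ρ² ≤ n²ρ(1−ρ). -/
/-- Discrete Fourier transform of a real vector `a ∈ ℝ^n`:
`â_j = ∑_{i=0}^{n-1} a_i e^{-2πi·ij/n}`. -/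
noncomputable def dft {n : ℕ} (a : Fin n → ℝ) (j : Fin n) : ℂ :=
  ∑ i : Fin n, (a i : ℂ) *
    Complex.exp (-(2 * Real.pi * Complex.I * ((i : ℕ) : ℂ) * ((j : ℕ) : ℂ)) / (n : ℂ))

/-- Transmissivity `ρ(a) = (1/n) ∑ i, a i`. -/
noncomputable def transmissivity {n : ℕ} (a : Fin n → ℝ) : ℝ :=
  (1 / (n : ℝ)) * ∑ i : Fin n, a i

/-- LMMSE `m(n,t,W,J,d,a) = ∑_i 1/(1/d_i + γ|â_i|²)` with
`γ = t/(n(W+Jρ(a)))`. -/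
noncomputable def lmmse (n : ℕ) (t W J : ℝ) (d : Fin n → ℝ) (a : Fin n → ℝ) : ℝ :=
  ∑ i : Fin n,
    1 / (1 / d i + (t / (n * (W + J * transmissivity a))) * ‖dft a i‖ ^ 2)

/-- Optimal LMMSE `m*(n,t,W,J,d)`: infimum of the LMMSE over apertures `a ∈ [0,1]^n`. -/
noncomputable def lmmseOpt (n : ℕ) (t W J : ℝ) (d : Fin n → ℝ) : ℝ :=
  sInf {m | ∃ a : Fin n → ℝ, (∀ i, a i ∈ Set.Icc (0 : ℝ) 1) ∧ m = lmmse n t W J d a}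

/-!
By Plancherel and `â₀ = ∑ aᵢ = nρ`, the power outside frequency zero equals `n ∑ aᵢ² - (nρ)²`, so
the task is to bound `∑ aᵢ²` on `[0,1]ⁿ` in terms of `s = ∑ aᵢ`. The extremal vector has `⌊s⌋`
entries equal to `1` and one entry equal to the fractional part of `s`, which suggests the bound
`∑ aᵢ² ≤ ⌊s⌋ + fract(s)²`; it follows by adding the entries one at a time.
-/

section FloorFract

variable {R : Type*} [CommRing R] [LinearOrder R] [IsStrictOrderedRing R] [FloorRing R]

theorem floor_add_fract_sq_le_self (s : R) : (⌊s⌋ : R) + Int.fract s ^ 2 ≤ s := by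
  have fract_sq_le : Int.fract s ^ 2 ≤ Int.fract s :=
    pow_le_of_le_one (Int.fract_nonneg s) (Int.fract_lt_one s).le two_ne_zero
  linarith [Int.floor_add_fract s]

theorem floor_add_fract_sq_add_sq_le (s : R) {x : R} (hx : x ∈ Set.Icc (0 : R) 1) :
    (⌊s⌋ : R) + Int.fract s ^ 2 + x ^ 2 ≤ (⌊s + x⌋ : R) + Int.fract (s + x) ^ 2 := by
  obtain ⟨x_nonneg, x_le_one⟩ := hx
  have fract_nonneg := Int.fract_nonneg s
  have fract_lt_one := Int.fract_lt_one s
  have floor_add_fract := Int.floor_add_fract s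
  rcases lt_or_ge (Int.fract s + x) 1 with no_carry | carry
  · have floor_eq : ⌊s + x⌋ = ⌊s⌋ := by
      rw [Int.floor_eq_iff]; constructor <;> linarith
    have fract_eq : Int.fract (s + x) = Int.fract s + x := by
      rw [Int.fract, floor_eq]; linarith
    rw [floor_eq, fract_eq]
    linarith [mul_nonneg fract_nonneg x_nonneg, add_sq (Int.fract s) x]
  · have floor_eq : ⌊s + x⌋ = ⌊s⌋ + 1 := by
      rw [Int.floor_eq_iff]; push_cast; constructor <;> linarith
    have fract_eq : Int.fract (s + x) = Int.fract s + x - 1 := by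
      rw [Int.fract, floor_eq]; push_cast; linarith
    rw [floor_eq, fract_eq]
    push_cast
    -- The difference of the two sides is `2 (1 - fract s) (1 - x)`.
    linarith [mul_nonneg (sub_nonneg.2 fract_lt_one.le) (sub_nonneg.2 x_le_one)]

theorem sum_sq_le_floor_add_fract_sq {ι : Type*} (t : Finset ι) {a : ι → R}
    (ha : ∀ i ∈ t, a i ∈ Set.Icc (0 : R) 1) :
    ∑ i ∈ t, a i ^ 2 ≤ (⌊∑ i ∈ t, a i⌋ : R) + Int.fract (∑ i ∈ t, a i) ^ 2 := by
  induction t using Finset.cons_induction with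
  | empty => simp
  | cons i t hi ih =>
    rw [Finset.forall_mem_cons] at ha
    calc ∑ k ∈ t.cons i hi, a k ^ 2
        = ∑ k ∈ t, a k ^ 2 + a i ^ 2 := by rw [Finset.sum_cons, add_comm]
      _ ≤ ⌊∑ k ∈ t, a k⌋ + Int.fract (∑ k ∈ t, a k) ^ 2 + a i ^ 2 := by gcongr; exact ih ha.2
      _ ≤ ⌊∑ k ∈ t, a k + a i⌋ + Int.fract (∑ k ∈ t, a k + a i) ^ 2 :=
        floor_add_fract_sq_add_sq_le _ ha.1
      _ = _ := by rw [Finset.sum_cons, add_comm (a i)]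

end FloorFract

section Plancherel

variable {n : ℕ} [NeZero n] {E : Type*} [NormedAddCommGroup E] [InnerProductSpace ℂ E]

theorem sum_inner_zmod_dft_left (Φ Ψ : ZMod n → E) :
    ∑ k, inner ℂ (ZMod.dft Φ k) (Ψ k) = ∑ j, inner ℂ (Φ j) (ZMod.dft Ψ (-j)) := by
  simp only [ZMod.dft_apply, sum_inner, inner_sum, inner_smul_left, inner_smul_right,
    ← AddChar.map_neg_eq_conj, neg_neg, mul_neg]
  rw [Finset.sum_comm]
  simp only [mul_comm]

theorem sum_norm_sq_zmod_dft (Φ : ZMod n → E) :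
    ∑ k, ‖ZMod.dft Φ k‖ ^ 2 = n * ∑ j, ‖Φ j‖ ^ 2 := by
  have plancherel : ∑ k, inner ℂ (ZMod.dft Φ k) (ZMod.dft Φ k) = n * ∑ j, inner ℂ (Φ j) (Φ j) := by
    simp only [sum_inner_zmod_dft_left, ZMod.dft_dft, neg_neg, inner_smul_right, Finset.mul_sum]
  simp only [inner_self_eq_norm_sq_to_K, Complex.coe_algebraMap] at plancherel
  exact_mod_cast plancherel

end Plancherel

section DFT

variable {n : ℕ} [NeZero n]

theorem zmod_finEquiv_apply (k : Fin n) : ZMod.finEquiv n k = ((k : ℕ) : ZMod n) := by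
  cases n with
  | zero => exact k.elim0
  | succ m => exact (Fin.cast_val_eq_self k).symm

theorem dft_eq_zmod_dft (a : Fin n → ℝ) (j : Fin n) :
    dft a j = ZMod.dft (fun k ↦ (a ((ZMod.finEquiv n).symm k) : ℂ)) (ZMod.finEquiv n j) := by
  rw [ZMod.dft_apply, ← (ZMod.finEquiv n).toEquiv.sum_comp]
  refine Finset.sum_congr rfl fun i _ ↦ ?_
  have arg_eq : -(ZMod.finEquiv n i * ZMod.finEquiv n j) = ((-(i * j : ℤ) : ℤ) : ZMod n) := by
    simp [zmod_finEquiv_apply]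
  simp only [RingEquiv.toEquiv_eq_coe, RingEquiv.coe_toEquiv, RingEquiv.symm_apply_apply, arg_eq,
    ZMod.stdAddChar_coe, smul_eq_mul, mul_comm (a i : ℂ)]
  push_cast
  ring_nf

theorem sum_norm_sq_dft (a : Fin n → ℝ) : ∑ j, ‖dft a j‖ ^ 2 = n * ∑ i, a i ^ 2 := by
  let e : Fin n ≃ ZMod n := (ZMod.finEquiv n).toEquiv
  calc ∑ j, ‖dft a j‖ ^ 2
      = ∑ j, ‖ZMod.dft (fun k ↦ (a (e.symm k) : ℂ)) (e j)‖ ^ 2 := by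
        simp only [dft_eq_zmod_dft]; rfl
    _ = ∑ k, ‖ZMod.dft (fun k ↦ (a (e.symm k) : ℂ)) k‖ ^ 2 :=
        e.sum_comp fun k ↦ ‖ZMod.dft (fun k ↦ (a (e.symm k) : ℂ)) k‖ ^ 2
    _ = n * ∑ k, a (e.symm k) ^ 2 := by
        simp only [sum_norm_sq_zmod_dft, Complex.norm_real, Real.norm_eq_abs, sq_abs]
    _ = n * ∑ i, a i ^ 2 := by rw [e.symm.sum_comp fun i ↦ a i ^ 2]

theorem dft_zero (a : Fin n → ℝ) : dft a 0 = ((∑ i, a i : ℝ) : ℂ) := by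
  simp [dft]

theorem sum_erase_zero_norm_sq_dft (a : Fin n → ℝ) :
    ∑ j ∈ Finset.univ.erase 0, ‖dft a j‖ ^ 2 = n * ∑ i, a i ^ 2 - (∑ i, a i) ^ 2 := by
  rw [Finset.sum_erase_eq_sub (Finset.mem_univ 0), sum_norm_sq_dft, dft_zero, Complex.norm_real,
    Real.norm_eq_abs, sq_abs]

theorem mul_transmissivity (a : Fin n → ℝ) : n * transmissivity a = ∑ i, a i := by
  rw [transmissivity, one_div, mul_inv_cancel_left₀ (NeZero.ne (n : ℝ))]

end DFT

/-- Power bound on the nonzero DFT frequencies of an aperture `a ∈ [0,1]^n`: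
`∑_{j≠0} |â_j|² ≤ n(⌊nρ⌋ + (nρ-⌊nρ⌋)²) - n²ρ² ≤ n²ρ(1-ρ)`. -/
theorem dft_power_bound (n : ℕ) (hn : 2 ≤ n) (a : Fin n → ℝ)
    (ha : ∀ i, a i ∈ Set.Icc (0 : ℝ) 1) (ρ : ℝ) (hρ : ρ = transmissivity a) :
    (∑ j ∈ Finset.univ.erase (⟨0, by omega⟩ : Fin n), ‖dft a j‖ ^ 2 ≤
        (n : ℝ) * ((⌊(n : ℝ) * ρ⌋ : ℝ) + ((n : ℝ) * ρ - (⌊(n : ℝ) * ρ⌋ : ℝ)) ^ 2)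
          - (n : ℝ) ^ 2 * ρ ^ 2) ∧
      ((n : ℝ) * ((⌊(n : ℝ) * ρ⌋ : ℝ) + ((n : ℝ) * ρ - (⌊(n : ℝ) * ρ⌋ : ℝ)) ^ 2)
          - (n : ℝ) ^ 2 * ρ ^ 2 ≤ (n : ℝ) ^ 2 * ρ * (1 - ρ)) := by
  have : NeZero n := ⟨by omega⟩
  have sum_eq : ∑ i, a i = n * ρ := by rw [hρ, mul_transmissivity]
  simp only [Int.self_sub_floor, ← mul_pow]
  constructor
  · calc ∑ j ∈ Finset.univ.erase (0 : Fin n), ‖dft a j‖ ^ 2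
        = n * ∑ i, a i ^ 2 - (n * ρ) ^ 2 := by rw [sum_erase_zero_norm_sq_dft, sum_eq]
      _ ≤ n * (⌊n * ρ⌋ + Int.fract (n * ρ) ^ 2) - (n * ρ) ^ 2 := by
        rw [← sum_eq]
        gcongr
        exact sum_sq_le_floor_add_fract_sq _ fun i _ ↦ ha i
  · calc n * (⌊n * ρ⌋ + Int.fract (n * ρ) ^ 2) - (n * ρ) ^ 2
        ≤ n * (n * ρ) - (n * ρ) ^ 2 := by gcongr; exact floor_add_fract_sq_le_self _
      _ = n ^ 2 * ρ * (1 - ρ) := by ring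
end
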